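/- Let S be a Boolean inverse semigroup. Then S is semisimple if and only if every nonzero element of S is above an atom and every nonzero element of S is a join of finitely many atoms. -/

import Mathlib

namespace Paper

/-- An inverse semigroup with zero: an associative multiplication, a zero that is
absorbing, and a map `⁻¹` sending each element to its unique generalized inverse. -/
class IsInverseSemigroup (S : Type*) [Mul S] [Zero S] [Inv S] : Prop where
  mul_assoc : ∀ a b c : S, a * b * c = a * (b * c)
  mul_inv_mul : ∀ a : S, a * a⁻¹ * a = a
  inv_mul_inv : ∀ a : S, a⁻¹ * a * a⁻¹ = a⁻¹
  inv_unique : ∀ a b : S, a * b * a = a → b * a * b = b → b = a⁻¹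
  zero_mul : ∀ a : S, 0 * a = 0
  mul_zero : ∀ a : S, a * 0 = 0

variable {S : Type*} [Mul S] [Zero S] [Inv S]

/-- The natural partial order: `a ≤ b` iff `a = b * a⁻¹ * a`. -/
def nle (a b : S) : Prop := a = b * a⁻¹ * a

/-- `e` is an idempotent. -/
def idem (e : S) : Prop := e * e = e

/-- `a` and `b` are compatible. -/
def compat (a b : S) : Prop := idem (a⁻¹ * b) ∧ idem (a * b⁻¹)

/-- `a` and `b` are orthogonal. -/
def orth (a b : S) : Prop := a⁻¹ * b = 0 ∧ a * b⁻¹ = 0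

/-- `j` is the least upper bound of `a` and `b` for the natural partial order. -/
def isJoin (a b j : S) : Prop :=
  nle a j ∧ nle b j ∧ ∀ c : S, nle a c → nle b c → nle j c

/-- `m` is the greatest lower bound of `a` and `b` for the natural partial order. -/
def isMeet (a b m : S) : Prop :=
  nle m a ∧ nle m b ∧ ∀ c : S, nle c a → nle c b → nle c m

/-- `a` is an atom: a nonzero element with nothing strictly between it and `0`. -/
def isAtomElem (a : S) : Prop := a ≠ 0 ∧ ∀ x : S, nle x a → x = a ∨ x = 0

/-- `s` is the least upper bound of the finite family `f`. -/
def isJoinFin {m : ℕ} (f : Fin m → S) (s : S) : Prop :=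
  (∀ i, nle (f i) s) ∧ ∀ c : S, (∀ i, nle (f i) c) → nle s c

/-- A Boolean inverse semigroup: a nonzero inverse semigroup with zero in which
compatible pairs have joins, multiplication distributes over binary compatible joins,
and the idempotents form a generalized Boolean algebra under the natural partial
order (meets of idempotents are automatically given by multiplication; the extra
requirement is the existence of relative complements). -/
class IsBooleanInverseSemigroup (S : Type*) [Mul S] [Zero S] [Inv S]
    extends IsInverseSemigroup S : Prop where
  exists_ne_zero : ∃ a : S, a ≠ 0
  compat_join : ∀ a b : S, compat a b → ∃ j, isJoin a b j
  mul_join : ∀ a b j c : S, isJoin a b j → isJoin (c * a) (c * b) (c * j)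
  join_mul : ∀ a b j c : S, isJoin a b j → isJoin (a * c) (b * c) (j * c)
  relcomp : ∀ e f : S, idem e → idem f → nle f e →
    ∃ g : S, idem g ∧ nle g e ∧ g * f = 0 ∧ isJoin f g e

/-!
The natural partial order makes every principal order ideal `a↓` look like a Boolean algebra:
for `x ≤ a`, the complement `k` of `x⁻¹ * x` below `a⁻¹ * a` yields the complement `a * k` of `x`
in `a↓`. The rest is order theory. Finite principal ideals give a well-founded order, so an atom
`x ≤ a` exists and `a` is the join of `x` and its strictly smaller complement, to which induction
applies. Conversely, if `a` is the join of a finite set `s` of atoms, then `s` contains every atom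
`g ≤ a`, as otherwise `s` would lie below the complement of `g`; hence each `x ≤ a` is the join of
a subset of `s`, and there are finitely many of those.
-/

section Order

variable {α : Type*} [PartialOrder α] [OrderBot α] {a c g x : α}

/-- `c` is the complement of `x` in the principal ideal `Set.Iic a`. As binary meets and joins need
not exist, `c` is described by a least upper bound and as the largest element of the ideal that is
disjoint from `x`. -/
structure IsSectionCompl (x a c : α) : Prop where
  isLUB : IsLUB {x, c} a
  disjoint : Disjoint x c
  le_of_disjoint : ∀ y ≤ a, Disjoint x y → y ≤ c

/-- A partial order with least element whose principal ideals are complemented in the sense of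
`IsSectionCompl`, such as a generalized Boolean algebra. -/
class IsSectionallyComplemented (α : Type*) [PartialOrder α] [OrderBot α] : Prop where
  exists_isSectionCompl : ∀ {x a : α}, x ≤ a → ∃ c, IsSectionCompl x a c

theorem IsSectionCompl.lt (h : IsSectionCompl x a c) (hx : x ≠ ⊥) : c < a := by
  have hxa : x ≤ a := h.isLUB.1 (Set.mem_insert x {c})
  refine (h.isLUB.1 (Set.mem_insert_of_mem x rfl)).lt_of_ne fun hca => hx ?_
  exact (hca ▸ h.disjoint).eq_bot_of_le hxa

theorem isLUB_insert_of_isLUB_pair {α : Type*} [Preorder α] {a c x : α} {s : Set α}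
    (ha : IsLUB {x, c} a) (hc : IsLUB s c) : IsLUB (insert x s) a := by
  rwa [IsLUB, upperBounds_insert, hc.upperBounds_eq, ← upperBounds_singleton (a := c),
    ← upperBounds_insert]

theorem wellFoundedLT_of_finite_Iic {α : Type*} [Preorder α]
    (hfin : ∀ a : α, (Set.Iic a).Finite) : WellFoundedLT α := by
  have hmono : StrictMono fun a : α => (Set.Iic a).ncard := fun _ b hab =>
    Set.ncard_lt_ncard (Set.Iic_ssubset_Iic.2 hab) (hfin b)
  exact hmono.wellFoundedLT

theorem exists_finset_atoms_isLUB [IsSectionallyComplemented α] [WellFoundedLT α] (a : α) :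
    ∃ s : Finset α, (∀ x ∈ s, IsAtom x) ∧ IsLUB (s : Set α) a := by
  classical
  have : IsAtomic α := isAtomic_of_orderBot_wellFounded_lt wellFounded_lt
  induction a using WellFoundedLT.induction with
  | ind a ih =>
    obtain rfl | ⟨x, hx, hxa⟩ := eq_bot_or_exists_atom_le a
    · exact ⟨∅, by simp⟩
    · obtain ⟨c, hc⟩ := IsSectionallyComplemented.exists_isSectionCompl hxa
      obtain ⟨s, hs, hsc⟩ := ih c (hc.lt hx.1)
      refine ⟨insert x s, Finset.forall_mem_insert _ _ _ |>.2 ⟨hx, hs⟩, ?_⟩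
      rw [Finset.coe_insert]
      exact isLUB_insert_of_isLUB_pair hc.isLUB hsc

theorem disjoint_of_isAtom_of_ne (hg : IsAtom g) (hx : IsAtom x) (hgx : g ≠ x) : Disjoint g x :=
  fun _ hyg hyx => le_bot_iff.2 <| (hg.le_iff.1 hyg).resolve_right fun hy =>
    hgx ((hx.le_iff_eq hg.1).1 (hy ▸ hyx))

theorem mem_of_isAtom_of_isLUB [IsSectionallyComplemented α] {s : Set α}
    (hs : ∀ x ∈ s, IsAtom x) (ha : IsLUB s a) (hg : IsAtom g) (hga : g ≤ a) : g ∈ s := by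
  by_contra hgs
  obtain ⟨c, hc⟩ := IsSectionallyComplemented.exists_isSectionCompl hga
  have hdisj : ∀ x ∈ s, Disjoint g x := fun x hx =>
    disjoint_of_isAtom_of_ne hg (hs x hx) (ne_of_mem_of_not_mem hx hgs).symm
  have hac : a ≤ c := ha.2 fun x hx => hc.le_of_disjoint x (ha.1 hx) (hdisj x hx)
  exact (hc.lt hg.1).not_ge hac

theorem finite_Iic_of_exists_finset_atoms_isLUB [IsSectionallyComplemented α]
    (h : ∀ a : α, ∃ s : Finset α, (∀ x ∈ s, IsAtom x) ∧ IsLUB (s : Set α) a) (a : α) :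
    (Set.Iic a).Finite := by
  choose s hatom hlub using h
  have hmaps : Set.MapsTo s (Set.Iic a) (s a).powerset := fun x hx =>
    Finset.mem_powerset.2 fun g hg =>
      mem_of_isAtom_of_isLUB (hatom a) (hlub a) (hatom x g hg) (((hlub x).1 hg).trans hx)
  have hinj : Set.InjOn s (Set.Iic a) := fun x _ y _ hxy => (hlub x).unique (hxy ▸ hlub y)
  exact Set.Finite.of_injOn hmaps hinj (Finset.finite_toSet _)

theorem exists_fin_isLUB_range_iff {p : α → Prop} (ha : a ≠ ⊥) :
    (∃ (m : ℕ) (f : Fin (m + 1) → α), (∀ i, p (f i)) ∧ IsLUB (Set.range f) a) ↔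
      ∃ s : Finset α, (∀ x ∈ s, p x) ∧ IsLUB (s : Set α) a := by
  classical
  constructor
  · rintro ⟨m, f, hf, hfa⟩
    exact ⟨Finset.univ.image f, by simpa using hf, by simpa using hfa⟩
  · rintro ⟨s, hs, hsa⟩
    have hne : s.Nonempty := by
      rw [Finset.nonempty_iff_ne_empty]
      rintro rfl
      exact ha (by simpa using hsa)
    obtain ⟨m, hm⟩ := Nat.exists_eq_succ_of_ne_zero hne.card_ne_zero
    let φ : Fin (m + 1) ≃ s := (s.equivFinOfCardEq hm).symm
    have hrange : Set.range (Subtype.val ∘ φ) = (s : Set α) := by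
      rw [φ.surjective.range_comp, Subtype.range_coe_subtype, Finset.setOfPred_mem]
    exact ⟨m, Subtype.val ∘ φ, fun i => hs _ (φ i).2, hrange ▸ hsa⟩

theorem semisimple_iff_atoms_general [IsSectionallyComplemented α] :
    (∀ a : α, (Set.Iic a).Finite) ↔
      ((∀ a : α, a ≠ ⊥ → ∃ x : α, IsAtom x ∧ x ≤ a) ∧
       (∀ a : α, a ≠ ⊥ → ∃ (m : ℕ) (f : Fin (m + 1) → α),
          (∀ i, IsAtom (f i)) ∧ IsLUB (Set.range f) a)) := by
  constructor
  · intro hfin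
    have := wellFoundedLT_of_finite_Iic hfin
    have : IsAtomic α := isAtomic_of_orderBot_wellFounded_lt wellFounded_lt
    exact ⟨fun a ha => (eq_bot_or_exists_atom_le a).resolve_left ha,
      fun a ha => (exists_fin_isLUB_range_iff ha).2 (exists_finset_atoms_isLUB a)⟩
  · rintro ⟨-, hjoin⟩
    refine finite_Iic_of_exists_finset_atoms_isLUB fun a => ?_
    obtain rfl | ha := eq_or_ne a ⊥
    · exact ⟨∅, by simp⟩
    · exact (exists_fin_isLUB_range_iff ha).1 (hjoin a ha)

end Order

section InverseSemigroup

variable [IsInverseSemigroup S] {a b e f x y : S}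

/-- The given multiplication and zero, bundled so that the semigroup lemmas of Mathlib apply. -/
instance instSemigroupWithZero : SemigroupWithZero S where
  mul_assoc := IsInverseSemigroup.mul_assoc
  zero_mul := IsInverseSemigroup.zero_mul
  mul_zero := IsInverseSemigroup.mul_zero

theorem mul_inv_mul_self (a : S) : a * (a⁻¹ * a) = a := by
  rw [← mul_assoc, IsInverseSemigroup.mul_inv_mul]

theorem idem_inv_mul_self (a : S) : idem (a⁻¹ * a) := by
  rw [idem, mul_assoc, mul_inv_mul_self]

theorem idem.inv_eq (he : idem e) : e⁻¹ = e :=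
  (IsInverseSemigroup.inv_unique e e (by rw [he, he]) (by rw [he, he])).symm

theorem idem.mul_self_mul (he : idem e) (a : S) : e * (e * a) = e * a := by
  rw [← mul_assoc, he]

-- `f * (e * f)⁻¹ * e` is also an inverse of `e * f`; by uniqueness `(e * f)⁻¹` is idempotent, hence
-- its own inverse.
theorem idem.mul (he : idem e) (hf : idem f) : idem (e * f) := by
  obtain ⟨x, hx⟩ : ∃ x, x = (e * f)⁻¹ := ⟨_, rfl⟩
  have hefx : e * f * x * (e * f) = e * f := hx ▸ IsInverseSemigroup.mul_inv_mul (e * f)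
  have hxef : x * (e * f) * x = x := hx ▸ IsInverseSemigroup.inv_mul_inv (e * f)
  have hfxe : f * x * e = x := by
    rw [hx]
    refine IsInverseSemigroup.inv_unique (e * f) _ ?_ ?_ <;> rw [← hx]
    · simpa only [mul_assoc, he.mul_self_mul, hf.mul_self_mul] using hefx
    · calc f * x * e * (e * f) * (f * x * e) = f * (x * (e * f) * x) * e := by
            simp only [mul_assoc, he.mul_self_mul, hf.mul_self_mul]
        _ = f * x * e := by rw [hxef]
  have hxx : idem x :=
    calc x * x = f * x * e * (f * x * e) := by rw [hfxe]
      _ = f * (x * (e * f) * x) * e := by simp only [mul_assoc]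
      _ = x := by rw [hxef, hfxe]
  have hef : e * f = x := (IsInverseSemigroup.inv_unique x (e * f) hxef hefx).trans hxx.inv_eq
  rwa [hef]

theorem idem.commute (he : idem e) (hf : idem f) : Commute e f := by
  have hef : e * f * (e * f) = e * f := he.mul hf
  have hfe : f * e * (f * e) = f * e := hf.mul he
  have hinv : f * e = (e * f)⁻¹ := by
    apply IsInverseSemigroup.inv_unique
    · simpa only [mul_assoc, he.mul_self_mul, hf.mul_self_mul] using hef
    · simpa only [mul_assoc, he.mul_self_mul, hf.mul_self_mul] using hfe
  exact (hinv.trans (he.mul hf).inv_eq).symm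

theorem nle_iff_exists_idem : nle a b ↔ ∃ e, idem e ∧ a = b * e := by
  constructor
  · intro h
    exact ⟨a⁻¹ * a, idem_inv_mul_self a, by rw [← mul_assoc]; exact h⟩
  · rintro ⟨e, he, ha⟩
    have hae : a * e = a := by rw [ha, mul_assoc, he]
    calc a = a * (a⁻¹ * a) := (mul_inv_mul_self a).symm
      _ = b * (e * (a⁻¹ * a)) := by rw [← mul_assoc b, ← ha]
      _ = b * (a⁻¹ * a * e) := by rw [(he.commute (idem_inv_mul_self a)).eq]
      _ = b * a⁻¹ * a := by rw [mul_assoc a⁻¹, hae, mul_assoc]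

/-- The natural partial order; `a ≤ b` is `nle a b` by definition. -/
instance instPartialOrder : PartialOrder S where
  le := nle
  le_refl a := nle_iff_exists_idem.2 ⟨a⁻¹ * a, idem_inv_mul_self a, (mul_inv_mul_self a).symm⟩
  le_trans a b c hab hbc := by
    obtain ⟨e, he, rfl⟩ := nle_iff_exists_idem.1 hab
    obtain ⟨f, hf, rfl⟩ := nle_iff_exists_idem.1 hbc
    exact nle_iff_exists_idem.2 ⟨f * e, hf.mul he, mul_assoc c f e⟩
  le_antisymm a b hab hba := by
    obtain ⟨e, he, hae⟩ := nle_iff_exists_idem.1 hab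
    obtain ⟨f, hf, hbf⟩ := nle_iff_exists_idem.1 hba
    have hb_mul : b * f = b := by rw [hbf, mul_assoc, hf]
    calc a = b * f * e := by rw [hb_mul, hae]
      _ = b * e * f := (hf.commute he).right_comm b
      _ = b := by rw [← hae, ← hbf]

/-- The least element `⊥` is `0` by definition. -/
instance instOrderBot : OrderBot S where
  bot := 0
  bot_le a := show (0 : S) = a * 0⁻¹ * 0 by rw [mul_zero]

theorem le_iff_exists_idem : a ≤ b ↔ ∃ e, idem e ∧ a = b * e :=
  nle_iff_exists_idem

theorem mul_idem_le (a : S) (he : idem e) : a * e ≤ a :=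
  le_iff_exists_idem.2 ⟨e, he, rfl⟩

theorem mul_idem_le_mul_idem (hab : a ≤ b) (he : idem e) : a * e ≤ b * e := by
  obtain ⟨f, hf, rfl⟩ := le_iff_exists_idem.1 hab
  rw [(hf.commute he).right_comm]
  exact mul_idem_le (b * e) hf

theorem mul_inv_mul_eq_of_le (hab : a ≤ b) : b * (a⁻¹ * a) = a := by
  rw [← mul_assoc]
  exact Eq.symm hab

theorem mul_idem_eq_self_of_le_mul_idem (he : idem e) (hab : a ≤ b * e) : a * e = a := by
  obtain ⟨f, hf, rfl⟩ := le_iff_exists_idem.1 hab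
  rw [(hf.commute he).right_comm, mul_assoc b e e, he]

theorem mul_inv_mul_eq_self_of_le (hab : a ≤ b) : a * (b⁻¹ * b) = a :=
  mul_idem_eq_self_of_le_mul_idem (idem_inv_mul_self b) (by rwa [mul_inv_mul_self])

theorem inv_mul_self_le_inv_mul_self (hab : a ≤ b) : a⁻¹ * a ≤ b⁻¹ * b := by
  refine le_iff_exists_idem.2 ⟨a⁻¹ * a, idem_inv_mul_self a, ?_⟩
  rw [((idem_inv_mul_self b).commute (idem_inv_mul_self a)).eq, mul_assoc,
    mul_inv_mul_eq_self_of_le hab]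

theorem mul_inv_mul_eq_zero_of_disjoint (hxa : x ≤ a) (hya : y ≤ a) (hxy : Disjoint x y) :
    y * (x⁻¹ * x) = 0 := by
  have hle : y * (x⁻¹ * x) ≤ x :=
    (mul_idem_le_mul_idem hya (idem_inv_mul_self x)).trans_eq (mul_inv_mul_eq_of_le hxa)
  exact le_bot_iff.1 (hxy hle (mul_idem_le y (idem_inv_mul_self x)))

theorem isAtomElem_iff_isAtom : isAtomElem a ↔ IsAtom a := by
  constructor
  · rintro ⟨ha, hle⟩
    exact ⟨ha, fun x hxa => (hle x hxa.le).resolve_left hxa.ne⟩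
  · intro ha
    exact ⟨ha.1, fun x hxa => (ha.le_iff.1 hxa).symm⟩

theorem isJoin_iff_isLUB_pair : isJoin a b x ↔ IsLUB {a, b} x := by
  simp only [IsLUB, IsLeast, upperBounds_insert, upperBounds_singleton, mem_lowerBounds,
    Set.mem_inter_iff, Set.mem_Ici, and_imp, and_assoc]
  rfl

theorem isJoinFin_iff_isLUB_range {m : ℕ} {f : Fin m → S} :
    isJoinFin f a ↔ IsLUB (Set.range f) a := by
  simp only [IsLUB, IsLeast, mem_upperBounds, mem_lowerBounds, Set.forall_mem_range]
  rfl

end InverseSemigroup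

section BooleanInverseSemigroup

variable [IsBooleanInverseSemigroup S] {a b j k x : S}

theorem isLUB_mul_left_pair (c : S) (h : IsLUB {a, b} j) :
    IsLUB {c * a, c * b} (c * j) :=
  isJoin_iff_isLUB_pair.1
    (IsBooleanInverseSemigroup.mul_join a b j c (isJoin_iff_isLUB_pair.2 h))

theorem isSectionCompl_mul (hxa : x ≤ a) (hk : idem k) (hkx : k * (x⁻¹ * x) = 0)
    (hlub : IsLUB {x⁻¹ * x, k} (a⁻¹ * a)) : IsSectionCompl x a (a * k) where
  isLUB := by
    simpa only [mul_inv_mul_eq_of_le hxa, mul_inv_mul_self] using isLUB_mul_left_pair a hlub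
  disjoint z hzx hzk := le_of_eq <|
    calc z = z * k * (x⁻¹ * x) := by
          rw [mul_idem_eq_self_of_le_mul_idem hk hzk, mul_inv_mul_eq_self_of_le hzx]
      _ = 0 := by rw [mul_assoc, hkx, mul_zero]
  le_of_disjoint y hya hxy := by
    have hy : IsLUB {0, y * k} y := by
      simpa only [mul_inv_mul_eq_zero_of_disjoint hxa hya hxy, mul_inv_mul_eq_self_of_le hya]
        using isLUB_mul_left_pair y hlub
    have hyk : y ≤ y * k := hy.2 <| by
      rintro _ (rfl | rfl)
      exacts [bot_le, le_rfl]
    exact hyk.trans (mul_idem_le_mul_idem hya hk)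

instance instIsSectionallyComplemented : IsSectionallyComplemented S where
  exists_isSectionCompl {x a} hxa := by
    obtain ⟨k, hk, -, hkx, hjoin⟩ := IsBooleanInverseSemigroup.relcomp (a⁻¹ * a) (x⁻¹ * x)
      (idem_inv_mul_self a) (idem_inv_mul_self x) (inv_mul_self_le_inv_mul_self hxa)
    exact ⟨a * k, isSectionCompl_mul hxa hk hkx (isJoin_iff_isLUB_pair.1 hjoin)⟩

end BooleanInverseSemigroup

/-- A Boolean inverse semigroup is semisimple (every principal order ideal is
finite) iff every nonzero element is above an atom and every nonzero element is a
join of finitely many atoms. -/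
theorem semisimple_iff_atoms (S : Type*) [Mul S] [Zero S] [Inv S]
    [IsBooleanInverseSemigroup S] :
    (∀ a : S, {x : S | nle x a}.Finite) ↔
      ((∀ a : S, a ≠ 0 → ∃ x : S, isAtomElem x ∧ nle x a) ∧
       (∀ a : S, a ≠ 0 → ∃ (m : ℕ) (f : Fin (m + 1) → S),
          (∀ i, isAtomElem (f i)) ∧ isJoinFin f a)) := by
  simp only [isAtomElem_iff_isAtom, isJoinFin_iff_isLUB_range]
  exact semisimple_iff_atoms_general

end Paper
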